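/- Let D > 0, let F : [0, D) → ℝ be C³ with F(0) = 0, F'(0) = 0, and F'(t), F''(t), F'''(t), and (F(t)/t)' all nonnegative on (0, D), and let r : ℂ² → ℝ be convex and Fréchet-differentiable. Define ρ(z) = F(|z₁|²) + r(z) for |z₁|² < D, and fix d with d² < D. Then for each k ∈ {1, 2} there is a constant c > 0 such that: for all ζ, z ∈ ℂ² with |ζ₁| ≤ d, |z₁| ≤ d, ρ(ζ) − ρ(z) ≥ 0, and |ζ₁| ≤ |z₁ − ζ₁|, one has |Φ(ζ,z)|^k · |z − ζ| ≥ c·( [ |Im Φ(ζ,z)| + ρ(ζ) − ρ(z) + F(|ζ₁|²/2) ]^k · |ζ₁| + [ |Im Φ(ζ,z)| + ρ(ζ) − ρ(z) + F(|z₁|²/2) ]^k · |z₁| ). -/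

import Mathlib

/-!
Twice the real part of `Φ(ζ, z)` is `ρ(ζ) - ρ(z)` plus the Bregman divergence of `ρ`, which splits
into that of `r`, nonnegative by convexity, and that of `F(|z₁|²)`. With `a = |ζ₁|²`, `b = |z₁|²`
and `s = |z₁ - ζ₁|²` the latter equals `F b - F a - F' a * (b - a) + F' a * s`. Since `a ≤ s` and
`F a ≤ a * F' a`, it is at least `F a`, which settles `F (a / 2)`, and also `F (b / 2)` if `b ≤ 2a`.
If `b ≥ 2a`, superadditivity of the convex function `F'` gives
`F b - F a - F' a * (b - a) ≥ F (b - a) ≥ F (b / 2)`. Hence both brackets are at most `3|Φ|`, and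
`|ζ₁| ≤ |z - ζ|` and `|z₁| ≤ 2|z - ζ|` finish the estimate with `c = 3⁻⁽ᵏ⁺¹⁾`.
-/

open Complex Set

/-- The Wirtinger derivative `∂g/∂z₁` of a real-valued function `g` on `ℂ²`. -/
noncomputable def wirt1 (g : ℂ × ℂ → ℝ) (ζ : ℂ × ℂ) : ℂ :=
  (1 / 2 : ℂ) * (((fderiv ℝ g ζ) (1, 0) : ℝ) - Complex.I * ((fderiv ℝ g ζ) (Complex.I, 0) : ℝ))

/-- The Wirtinger derivative `∂g/∂z₂`. -/
noncomputable def wirt2 (g : ℂ × ℂ → ℝ) (ζ : ℂ × ℂ) : ℂ :=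
  (1 / 2 : ℂ) * (((fderiv ℝ g ζ) (0, 1) : ℝ) - Complex.I * ((fderiv ℝ g ζ) (0, Complex.I) : ℝ))

/-- The support function `Φ(ζ,z) = Σ_{j=1}^{2} (∂g/∂ζ_j)(ζ)·(ζ_j − z_j)`. -/
noncomputable def suppFn (g : ℂ × ℂ → ℝ) (ζ z : ℂ × ℂ) : ℂ :=
  wirt1 g ζ * (ζ.1 - z.1) + wirt2 g ζ * (ζ.2 - z.2)

/-- The Euclidean norm on `ℂ²`. -/
noncomputable def eNorm (w : ℂ × ℂ) : ℝ :=
  Real.sqrt (‖w.1‖ ^ 2 + ‖w.2‖ ^ 2)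

open scoped Topology

section Calculus

lemma convexOn_Ico_of_hasDerivWithinAt2_nonneg {a b : ℝ} {f f' f'' : ℝ → ℝ}
    (hf : ∀ t ∈ Ico a b, HasDerivWithinAt f (f' t) (Ico a b) t)
    (hf' : ∀ t ∈ Ico a b, HasDerivWithinAt f' (f'' t) (Ico a b) t)
    (hf'' : ∀ t ∈ Ioo a b, 0 ≤ f'' t) : ConvexOn ℝ (Ico a b) f :=
  convexOn_of_hasDerivWithinAt2_nonneg (convex_Ico a b)
    (fun t ht => (hf t ht).continuousWithinAt)
    (fun t ht => (hf t (interior_subset ht)).mono interior_subset)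
    (fun t ht => (hf' t (interior_subset ht)).mono interior_subset)
    (by rwa [interior_Ico])

lemma monotoneOn_Ico_of_hasDerivWithinAt_nonneg {a b : ℝ} {f f' : ℝ → ℝ}
    (hf : ∀ t ∈ Ico a b, HasDerivWithinAt f (f' t) (Ico a b) t)
    (hf' : ∀ t ∈ Ioo a b, 0 ≤ f' t) : MonotoneOn f (Ico a b) :=
  monotoneOn_of_hasDerivWithinAt_nonneg (convex_Ico a b)
    (fun t ht => (hf t ht).continuousWithinAt)
    (fun t ht => (hf t (interior_subset ht)).mono interior_subset)
    (by rwa [interior_Ico])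

lemma convexOn_of_hasDerivWithinAt_of_monotoneOn {s : Set ℝ} {f f' : ℝ → ℝ} (hs : Convex ℝ s)
    (hf : ∀ t ∈ s, HasDerivWithinAt f (f' t) s t) (hf' : MonotoneOn f' s) : ConvexOn ℝ s f := by
  have hderiv : ∀ t ∈ interior s, HasDerivAt f (f' t) t := fun t ht =>
    (hf t (interior_subset ht)).hasDerivAt (mem_interior_iff_mem_nhds.1 ht)
  refine MonotoneOn.convexOn_of_deriv hs (fun t ht => (hf t ht).continuousWithinAt)
    (fun t ht => (hderiv t ht).differentiableAt.differentiableWithinAt) ?_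
  exact (hf'.mono interior_subset).congr fun t ht => (hderiv t ht).deriv.symm

lemma hasFDerivWithinAt_apply_sub_le_of_convexOn {E : Type*} [NormedAddCommGroup E]
    [NormedSpace ℝ E] {s : Set E} {f : E → ℝ} {f' : E →L[ℝ] ℝ} {x y : E} (hf : ConvexOn ℝ s f)
    (hx : x ∈ s) (hy : y ∈ s) (hf' : HasFDerivWithinAt f f' s x) : f' (y - x) ≤ f y - f x := by
  let ℓ : ℝ →ᵃ[ℝ] E := AffineMap.lineMap x y
  have hconv : ConvexOn ℝ (ℓ ⁻¹' s) (f ∘ ℓ) := hf.comp_affineMap ℓ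
  have hline : HasDerivWithinAt ℓ (y - x) (ℓ ⁻¹' s) 0 := AffineMap.hasDerivWithinAt_lineMap
  have hderiv : HasDerivWithinAt (f ∘ ℓ) (f' (y - x)) (ℓ ⁻¹' s) 0 :=
    HasFDerivWithinAt.comp_hasDerivWithinAt (0 : ℝ) (by simpa [ℓ] using hf') hline
      (mapsTo_preimage ℓ s)
  simpa [ℓ, slope_def_field] using
    hconv.le_slope_of_hasDerivWithinAt (by simpa [ℓ]) (by simpa [ℓ]) one_pos hderiv

lemma hasDerivWithinAt_mul_sub_le_of_convexOn {s : Set ℝ} {f : ℝ → ℝ} {f' x y : ℝ}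
    (hf : ConvexOn ℝ s f) (hx : x ∈ s) (hy : y ∈ s) (hf' : HasDerivWithinAt f f' s x) :
    f' * (y - x) ≤ f y - f x := by
  simpa [mul_comm] using
    hasFDerivWithinAt_apply_sub_le_of_convexOn hf hx hy hf'.hasFDerivWithinAt

end Calculus

section Superadditive

variable {D : ℝ} {f f' : ℝ → ℝ}

lemma add_le_map_add_of_convexOn {s : Set ℝ} {x y : ℝ} (hf : ConvexOn ℝ s f) (h0s : 0 ∈ s)
    (h0 : f 0 ≤ 0) (hx : 0 ≤ x) (hy : 0 ≤ y) (hxy : x + y ∈ s) : f x + f y ≤ f (x + y) := by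
  rcases (add_nonneg hx hy).eq_or_lt with hsum | hsum
  · obtain rfl : x = 0 := by linarith
    obtain rfl : y = 0 := by linarith
    simpa using h0
  have le_fraction : ∀ u v : ℝ, 0 ≤ u → 0 ≤ v → u + v = x + y →
      f u ≤ u / (x + y) * f (x + y) := by
    intro u v hu hv huv
    have key := hf.2 hxy h0s (div_nonneg hu hsum.le) (div_nonneg hv hsum.le)
      (by rw [← add_div, huv, div_self hsum.ne'])
    rw [smul_zero, add_zero, smul_eq_mul, smul_eq_mul, smul_eq_mul,
      div_mul_cancel₀ u hsum.ne'] at key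
    linarith [mul_nonpos_of_nonneg_of_nonpos (div_nonneg hv hsum.le) h0]
  calc f x + f y ≤ x / (x + y) * f (x + y) + y / (x + y) * f (x + y) :=
        add_le_add (le_fraction x y hx hy rfl) (le_fraction y x hy hx (add_comm y x))
    _ = f (x + y) := by rw [← add_mul, ← add_div, div_self hsum.ne', one_mul]

lemma monotoneOn_Ico_of_superadditive_of_nonneg
    (hadd : ∀ x y, 0 ≤ x → 0 ≤ y → x + y < D → f x + f y ≤ f (x + y))
    (hnonneg : ∀ t ∈ Ico 0 D, 0 ≤ f t) : MonotoneOn f (Ico 0 D) := by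
  intro x hx y hy hxy
  have hdiff : 0 ≤ f (y - x) := hnonneg _ ⟨sub_nonneg.2 hxy, by linarith [hx.1, hy.2]⟩
  have := hadd x (y - x) hx.1 (sub_nonneg.2 hxy) (by linarith [hy.2])
  rw [add_sub_cancel] at this
  linarith

lemma map_sub_map_zero_le_of_superadditive_deriv
    (hf : ∀ t ∈ Ico 0 D, HasDerivWithinAt f (f' t) (Ico 0 D) t)
    (hadd : ∀ x y, 0 ≤ x → 0 ≤ y → x + y < D → f' x + f' y ≤ f' (x + y))
    {a x : ℝ} (ha : 0 ≤ a) (hx : 0 ≤ x) (hax : a + x < D) :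
    f x - f 0 ≤ f (a + x) - f a - f' a * x := by
  have hcont : ContinuousOn f (Ico 0 D) := fun t ht => (hf t ht).continuousWithinAt
  have hderiv : ∀ t ∈ Ioo 0 D, HasDerivAt f (f' t) t := fun t ht =>
    (hf t ⟨ht.1.le, ht.2⟩).hasDerivAt (Ico_mem_nhds ht.1 ht.2)
  have hmono : MonotoneOn (fun t => f (a + t) - f t - f' a * t) (Icc 0 x) := by
    refine monotoneOn_of_hasDerivWithinAt_nonneg (f' := fun t => f' (a + t) - f' t - f' a * 1)
      (convex_Icc 0 x) ?_ ?_ ?_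
    · refine ((hcont.comp (by fun_prop) fun t ht => ?_).sub (hcont.mono fun t ht => ?_)).sub
        (by fun_prop)
      · exact ⟨by linarith [ht.1], by linarith [ht.2]⟩
      · exact ⟨ht.1, by linarith [ht.2]⟩
    · rw [interior_Icc]
      intro t ht
      refine HasDerivAt.hasDerivWithinAt (((HasDerivAt.comp_const_add a t ?_).sub ?_).sub
        ((hasDerivAt_id t).const_mul (f' a)))
      · exact hderiv _ ⟨by linarith [ht.1], by linarith [ht.2]⟩
      · exact hderiv _ ⟨ht.1, by linarith [ht.2]⟩
    · rw [interior_Icc]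
      intro t ht
      linarith [hadd a t ha ht.1.le (by linarith [ht.2])]
  have := hmono ⟨le_rfl, hx⟩ ⟨hx, le_rfl⟩ hx
  simp only [add_zero, mul_zero, sub_zero] at this
  linarith

lemma max_map_half_le_of_superadditive_deriv
    (hf : ∀ t ∈ Ico 0 D, HasDerivWithinAt f (f' t) (Ico 0 D) t) (hf0 : f 0 ≤ 0)
    (hadd : ∀ x y, 0 ≤ x → 0 ≤ y → x + y < D → f' x + f' y ≤ f' (x + y))
    (hnonneg : ∀ t ∈ Ico 0 D, 0 ≤ f' t) {a b s : ℝ} (ha : a ∈ Ico 0 D) (hb : b ∈ Ico 0 D)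
    (has : a ≤ s) :
    max (f (a / 2)) (f (b / 2)) ≤ f b - f a - f' a * (b - a - s) := by
  have hmono : MonotoneOn f (Ico 0 D) :=
    monotoneOn_Ico_of_hasDerivWithinAt_nonneg hf fun t ht => hnonneg t (Ioo_subset_Ico_self ht)
  have hconv : ConvexOn ℝ (Ico 0 D) f := convexOn_of_hasDerivWithinAt_of_monotoneOn
    (convex_Ico 0 D) hf (monotoneOn_Ico_of_superadditive_of_nonneg hadd hnonneg)
  have ha2 : a / 2 ∈ Ico 0 D := ⟨by linarith [ha.1], by linarith [ha.1, ha.2]⟩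
  have hb2 : b / 2 ∈ Ico 0 D := ⟨by linarith [hb.1], by linarith [hb.1, hb.2]⟩
  have tangent {t : ℝ} (ht : t ∈ Ico 0 D) : f' a * (t - a) ≤ f t - f a :=
    hasDerivWithinAt_mul_sub_le_of_convexOn hconv ha ht (hf a ha)
  have hslope : 0 ≤ f' a := hnonneg a ha
  have hslope_le : f' a * a ≤ f' a * s := mul_le_mul_of_nonneg_left has hslope
  have hle : f a ≤ f b - f a - f' a * (b - a - s) := by
    linarith [tangent hb, tangent ⟨le_rfl, ha.1.trans_lt ha.2⟩]
  refine max_le ((hmono ha2 ha (by linarith [ha.1])).trans hle) ?_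
  rcases le_total b (2 * a) with hba | hab
  · exact (hmono hb2 ha (by linarith)).trans hle
  · have hsub := map_sub_map_zero_le_of_superadditive_deriv hf hadd ha.1
      (x := b - a) (by linarith [ha.1]) (by linarith [hb.2])
    rw [add_sub_cancel] at hsub
    have hhalf : f (b / 2) ≤ f (b - a) :=
      hmono hb2 ⟨by linarith [ha.1], by linarith [ha.1, hb.2]⟩ (by linarith)
    linarith [mul_nonneg hslope ha.1]

end Superadditive

section Bregman

variable {E G : Type*} [NormedAddCommGroup E] [NormedSpace ℝ E] [NormedAddCommGroup G]
  [NormedSpace ℝ G]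

/-- The Bregman divergence of `f`: the remainder at `y` of the first-order Taylor expansion of `f`
at `x`. It measures the excess of `2 Re Φ(ζ, z)` over `ρ(ζ) - ρ(z)`. No convexity is built in, and
if `f` is not differentiable at `x` the linear term is the junk value `0`. -/
noncomputable def bregmanDiv (f : E → ℝ) (x y : E) : ℝ :=
  f y - f x - fderiv ℝ f x (y - x)

lemma bregmanDiv_congr {f g : E → ℝ} {x y : E} (hx : f =ᶠ[𝓝 x] g) (hy : f y = g y) :
    bregmanDiv f x y = bregmanDiv g x y := by
  rw [bregmanDiv, bregmanDiv, hx.fderiv_eq, hx.eq_of_nhds, hy]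

lemma bregmanDiv_add {f g : E → ℝ} {x : E} (hf : DifferentiableAt ℝ f x)
    (hg : DifferentiableAt ℝ g x) (y : E) :
    bregmanDiv (f + g) x y = bregmanDiv f x y + bregmanDiv g x y := by
  simp only [bregmanDiv, fderiv_add hf hg, Pi.add_apply, add_apply]
  ring

lemma bregmanDiv_comp_continuousLinearMap {f : G → ℝ} (L : E →L[ℝ] G) {x : E}
    (hf : DifferentiableAt ℝ f (L x)) (y : E) :
    bregmanDiv (f ∘ L) x y = bregmanDiv f (L x) (L y) := by
  simp only [bregmanDiv, fderiv_comp x hf L.differentiableAt, L.fderiv, Function.comp_apply,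
    ContinuousLinearMap.comp_apply, map_sub]

lemma bregmanDiv_nonneg_of_convexOn {f : E → ℝ} {s : Set E} {x y : E} (hf : ConvexOn ℝ s f)
    (hx : x ∈ s) (hy : y ∈ s) (hdiff : DifferentiableAt ℝ f x) : 0 ≤ bregmanDiv f x y :=
  sub_nonneg.2 <| hasFDerivWithinAt_apply_sub_le_of_convexOn hf hx hy
    hdiff.hasFDerivAt.hasFDerivWithinAt

end Bregman

section Radial

variable {E : Type*} [NormedAddCommGroup E] [InnerProductSpace ℝ E] {F F' : ℝ → ℝ} {x y : E}

lemma hasFDerivAt_comp_norm_sq {m : ℝ} (hF : HasDerivWithinAt F m (Ici 0) (‖x‖ ^ 2)) :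
    HasFDerivAt (fun v : E => F (‖v‖ ^ 2)) (m • 2 • innerSL ℝ x) x := by
  rw [← hasFDerivWithinAt_univ]
  exact hF.comp_hasFDerivWithinAt x (hasStrictFDerivAt_norm_sq x).hasFDerivAt.hasFDerivWithinAt
    fun v _ => sq_nonneg ‖v‖

lemma bregmanDiv_comp_norm_sq {m : ℝ} (hF : HasDerivWithinAt F m (Ici 0) (‖x‖ ^ 2)) :
    bregmanDiv (fun v : E => F (‖v‖ ^ 2)) x y =
      F (‖y‖ ^ 2) - F (‖x‖ ^ 2) - m * (‖y‖ ^ 2 - ‖x‖ ^ 2 - ‖y - x‖ ^ 2) := by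
  have hpolar : 2 * inner ℝ x (y - x) = ‖y‖ ^ 2 - ‖x‖ ^ 2 - ‖y - x‖ ^ 2 := by
    have := norm_add_sq_real x (y - x)
    rw [add_sub_cancel] at this
    linarith
  simp [bregmanDiv, (hasFDerivAt_comp_norm_sq hF).fderiv, ← hpolar]

end Radial

lemma two_mul_re_suppFn_eq_fderiv (g : ℂ × ℂ → ℝ) (ζ z : ℂ × ℂ) :
    2 * (suppFn g ζ z).re = fderiv ℝ g ζ (ζ - z) := by
  have hbasis (w : ℂ × ℂ) : w = w.1.re • ((1, 0) : ℂ × ℂ) + w.1.im • ((I, 0) : ℂ × ℂ)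
      + w.2.re • ((0, 1) : ℂ × ℂ) + w.2.im • ((0, I) : ℂ × ℂ) := by
    ext <;> simp
  have hwirt (a b : ℝ) (w : ℂ) : 2 * ((1 / 2 : ℂ) * (a - I * b) * w).re = a * w.re + b * w.im := by
    simp
    ring
  rw [suppFn, add_re, mul_add, wirt1, wirt2, hwirt, hwirt, ← Prod.fst_sub, ← Prod.snd_sub]
  conv_rhs => rw [hbasis (ζ - z)]
  simp only [map_add, map_smul, smul_eq_mul]
  ring

lemma two_mul_re_suppFn (g : ℂ × ℂ → ℝ) (ζ z : ℂ × ℂ) :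
    2 * (suppFn g ζ z).re = g ζ - g z + bregmanDiv g ζ z := by
  rw [two_mul_re_suppFn_eq_fderiv, bregmanDiv, ← neg_sub z ζ, map_neg]
  ring

lemma norm_fst_le_eNorm (w : ℂ × ℂ) : ‖w.1‖ ≤ eNorm w :=
  Real.le_sqrt_of_sq_le (le_add_of_nonneg_right (sq_nonneg _))

section Estimate

variable {D : ℝ} {F F' : ℝ → ℝ} {r ρ : ℂ × ℂ → ℝ} {ζ z : ℂ × ℂ}

lemma bregmanDiv_comp_norm_sq_fst_le_bregmanDiv {m : ℝ}
    (hF : HasDerivWithinAt F m (Ici 0) (‖ζ.1‖ ^ 2)) (hr : ConvexOn ℝ univ r)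
    (hdiff : DifferentiableAt ℝ r ζ)
    (hρ : ∀ w : ℂ × ℂ, ‖w.1‖ ^ 2 < D → ρ w = F (‖w.1‖ ^ 2) + r w)
    (hζ : ‖ζ.1‖ ^ 2 < D) (hz : ‖z.1‖ ^ 2 < D) :
    bregmanDiv (fun v : ℂ => F (‖v‖ ^ 2)) ζ.1 z.1 ≤ bregmanDiv ρ ζ z := by
  let G : ℂ → ℝ := fun v => F (‖v‖ ^ 2)
  let π : ℂ × ℂ →L[ℝ] ℂ := ContinuousLinearMap.fst ℝ ℂ ℂ
  have hG : DifferentiableAt ℝ G (π ζ) := (hasFDerivAt_comp_norm_sq hF).differentiableAt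
  have hopen : IsOpen {w : ℂ × ℂ | ‖w.1‖ ^ 2 < D} := isOpen_lt (by fun_prop) continuous_const
  have hsplit : ρ =ᶠ[𝓝 ζ] G ∘ π + r := by
    filter_upwards [hopen.mem_nhds hζ] with w hw using hρ w hw
  rw [bregmanDiv_congr hsplit (hρ z hz), bregmanDiv_add (hG.comp ζ π.differentiableAt) hdiff,
    bregmanDiv_comp_continuousLinearMap π hG]
  exact le_add_of_nonneg_right
    (bregmanDiv_nonneg_of_convexOn hr (mem_univ ζ) (mem_univ z) hdiff)

lemma add_max_map_half_le_two_mul_re_suppFn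
    (hF : ∀ t ∈ Ico 0 D, HasDerivWithinAt F (F' t) (Ico 0 D) t) (hF0 : F 0 ≤ 0)
    (hadd : ∀ x y, 0 ≤ x → 0 ≤ y → x + y < D → F' x + F' y ≤ F' (x + y))
    (hnonneg : ∀ t ∈ Ico 0 D, 0 ≤ F' t) (hr : ConvexOn ℝ univ r) (hdiff : DifferentiableAt ℝ r ζ)
    (hρ : ∀ w : ℂ × ℂ, ‖w.1‖ ^ 2 < D → ρ w = F (‖w.1‖ ^ 2) + r w)
    (hζ : ‖ζ.1‖ ^ 2 < D) (hz : ‖z.1‖ ^ 2 < D) (hle : ‖ζ.1‖ ≤ ‖z.1 - ζ.1‖) :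
    ρ ζ - ρ z + max (F (‖ζ.1‖ ^ 2 / 2)) (F (‖z.1‖ ^ 2 / 2)) ≤ 2 * (suppFn ρ ζ z).re := by
  have hderiv : HasDerivWithinAt F (F' (‖ζ.1‖ ^ 2)) (Ici 0) (‖ζ.1‖ ^ 2) := by
    refine (hF _ ⟨sq_nonneg _, hζ⟩).mono_of_mem_nhdsWithin ?_
    exact inter_mem_nhdsWithin _ (Iio_mem_nhds hζ)
  rw [two_mul_re_suppFn]
  gcongr
  calc max (F (‖ζ.1‖ ^ 2 / 2)) (F (‖z.1‖ ^ 2 / 2))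
      ≤ F (‖z.1‖ ^ 2) - F (‖ζ.1‖ ^ 2)
          - F' (‖ζ.1‖ ^ 2) * (‖z.1‖ ^ 2 - ‖ζ.1‖ ^ 2 - ‖z.1 - ζ.1‖ ^ 2) :=
        max_map_half_le_of_superadditive_deriv hF hF0 hadd hnonneg ⟨sq_nonneg _, hζ⟩
          ⟨sq_nonneg _, hz⟩ (pow_le_pow_left₀ (norm_nonneg _) hle 2)
    _ = bregmanDiv (fun v : ℂ => F (‖v‖ ^ 2)) ζ.1 z.1 := (bregmanDiv_comp_norm_sq hderiv).symm
    _ ≤ bregmanDiv ρ ζ z := bregmanDiv_comp_norm_sq_fst_le_bregmanDiv hderiv hr hdiff hρ hζ hz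

lemma pow_mul_add_pow_mul_le {A B M N x y : ℝ} (k : ℕ) (hA : 0 ≤ A) (hB : 0 ≤ B) (hAM : A ≤ M)
    (hBM : B ≤ M) (hx : 0 ≤ x) (hy : 0 ≤ y) (hxN : x ≤ N) (hyN : y ≤ 2 * N) :
    A ^ k * x + B ^ k * y ≤ 3 * (M ^ k * N) := by
  have hM : 0 ≤ M := hA.trans hAM
  calc A ^ k * x + B ^ k * y ≤ M ^ k * N + M ^ k * (2 * N) := by gcongr
    _ = 3 * (M ^ k * N) := by ring

theorem stmt6_general
    (hF : ∀ t ∈ Ico 0 D, HasDerivWithinAt F (F' t) (Ico 0 D) t) (hF0 : F 0 = 0) (hF'0 : F' 0 = 0)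
    (hF'pos : ∀ t ∈ Ioo 0 D, 0 ≤ F' t) (hF'conv : ConvexOn ℝ (Ico 0 D) F')
    (hr : ConvexOn ℝ univ r) (hdiff : DifferentiableAt ℝ r ζ)
    (hρ : ∀ w : ℂ × ℂ, ‖w.1‖ ^ 2 < D → ρ w = F (‖w.1‖ ^ 2) + r w) (k : ℕ)
    (hζ : ‖ζ.1‖ ^ 2 < D) (hz : ‖z.1‖ ^ 2 < D) (hpos : 0 ≤ ρ ζ - ρ z)
    (hle : ‖ζ.1‖ ≤ ‖z.1 - ζ.1‖) :
    ‖suppFn ρ ζ z‖ ^ k * eNorm (z - ζ) ≥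
      (3 ^ (k + 1))⁻¹ *
        ((|(suppFn ρ ζ z).im| + ρ ζ - ρ z + F (‖ζ.1‖ ^ 2 / 2)) ^ k * ‖ζ.1‖ +
          (|(suppFn ρ ζ z).im| + ρ ζ - ρ z + F (‖z.1‖ ^ 2 / 2)) ^ k * ‖z.1‖) := by
  have h0D : (0 : ℝ) ∈ Ico 0 D := ⟨le_rfl, (sq_nonneg _).trans_lt hζ⟩
  have hadd (x y : ℝ) (hx : 0 ≤ x) (hy : 0 ≤ y) (hxy : x + y < D) : F' x + F' y ≤ F' (x + y) :=
    add_le_map_add_of_convexOn hF'conv h0D hF'0.le hx hy ⟨add_nonneg hx hy, hxy⟩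
  have hnonneg (t : ℝ) (ht : t ∈ Ico 0 D) : 0 ≤ F' t := by
    rcases ht.1.eq_or_lt with rfl | ht0
    exacts [hF'0.ge, hF'pos t ⟨ht0, ht.2⟩]
  have hFhalf (a : ℝ) (ha : 0 ≤ a) (haD : a < D) : 0 ≤ F (a / 2) :=
    hF0.ge.trans <| monotoneOn_Ico_of_hasDerivWithinAt_nonneg hF hF'pos h0D
      ⟨by linarith, by linarith⟩ (by linarith)
  have hre := add_max_map_half_le_two_mul_re_suppFn hF hF0.le hadd hnonneg hr hdiff hρ hζ hz hle
  have bracket_nonneg (a : ℝ) (ha : 0 ≤ a) (haD : a < D) :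
      0 ≤ |(suppFn ρ ζ z).im| + ρ ζ - ρ z + F (a / 2) := by
    linarith [abs_nonneg (suppFn ρ ζ z).im, hFhalf a ha haD]
  have bracket_le (u : ℝ) (hu : u ≤ max (F (‖ζ.1‖ ^ 2 / 2)) (F (‖z.1‖ ^ 2 / 2))) :
      |(suppFn ρ ζ z).im| + ρ ζ - ρ z + u ≤ 3 * ‖suppFn ρ ζ z‖ := by
    linarith [abs_im_le_norm (suppFn ρ ζ z), re_le_norm (suppFn ρ ζ z)]
  have hnorm_fst : ‖z.1 - ζ.1‖ ≤ eNorm (z - ζ) := norm_fst_le_eNorm (z - ζ)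
  rw [ge_iff_le, inv_mul_le_iff₀ (by positivity)]
  calc _ ≤ 3 * ((3 * ‖suppFn ρ ζ z‖) ^ k * eNorm (z - ζ)) :=
        pow_mul_add_pow_mul_le k (bracket_nonneg _ (sq_nonneg _) hζ)
          (bracket_nonneg _ (sq_nonneg _) hz) (bracket_le _ (le_max_left _ _))
          (bracket_le _ (le_max_right _ _)) (norm_nonneg _) (norm_nonneg _) (hle.trans hnorm_fst)
          (by linarith [norm_le_insert' z.1 ζ.1])
    _ = 3 ^ (k + 1) * (‖suppFn ρ ζ z‖ ^ k * eNorm (z - ζ)) := by ring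

end Estimate

/-- Lemma 2.2, second case: lower bound for the support function of
`ρ(z) = F(|z₁|²) + r(z)` when `|ζ₁| ≤ |z₁ − ζ₁|`. -/
theorem stmt6 (D : ℝ) (hD : 0 < D) (F F' F'' F''' : ℝ → ℝ)
    (hF : ContDiffOn ℝ 3 F (Set.Ico 0 D))
    (hF' : ∀ t ∈ Set.Ico 0 D, HasDerivWithinAt F (F' t) (Set.Ico 0 D) t)
    (hF'' : ∀ t ∈ Set.Ico 0 D, HasDerivWithinAt F' (F'' t) (Set.Ico 0 D) t)
    (hF''' : ∀ t ∈ Set.Ico 0 D, HasDerivWithinAt F'' (F''' t) (Set.Ico 0 D) t)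
    (hF0 : F 0 = 0) (hF'0 : F' 0 = 0)
    (hF'pos : ∀ t ∈ Set.Ioo 0 D, 0 ≤ F' t)
    (hF''pos : ∀ t ∈ Set.Ioo 0 D, 0 ≤ F'' t)
    (hF'''pos : ∀ t ∈ Set.Ioo 0 D, 0 ≤ F''' t)
    (hquot : ∀ t ∈ Set.Ioo 0 D, 0 ≤ deriv (fun s => F s / s) t)
    (r : ℂ × ℂ → ℝ) (hconv : ConvexOn ℝ Set.univ r) (hdiff : Differentiable ℝ r)
    (ρ : ℂ × ℂ → ℝ)
    (hρ : ∀ z : ℂ × ℂ, ‖z.1‖ ^ 2 < D → ρ z = F (‖z.1‖ ^ 2) + r z)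
    (d : ℝ) (hd : d ^ 2 < D) (k : ℕ) (hk : k = 1 ∨ k = 2) :
    ∃ c > (0 : ℝ), ∀ ζ z : ℂ × ℂ,
      ‖ζ.1‖ ≤ d → ‖z.1‖ ≤ d → 0 ≤ ρ ζ - ρ z →
      ‖ζ.1‖ ≤ ‖z.1 - ζ.1‖ →
      ‖suppFn ρ ζ z‖ ^ k * eNorm (z - ζ) ≥
        c * ((|(suppFn ρ ζ z).im| + ρ ζ - ρ z + F (‖ζ.1‖ ^ 2 / 2)) ^ k *
              ‖ζ.1‖ +
            (|(suppFn ρ ζ z).im| + ρ ζ - ρ z + F (‖z.1‖ ^ 2 / 2)) ^ k *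
              ‖z.1‖) := by
  refine ⟨(3 ^ (k + 1))⁻¹, by positivity, fun ζ z hζ hz => stmt6_general hF' hF0 hF'0 hF'pos
    (convexOn_Ico_of_hasDerivWithinAt2_nonneg hF'' hF''' hF'''pos) hconv (hdiff ζ) hρ k ?_ ?_⟩
  exacts [(pow_le_pow_left₀ (norm_nonneg _) hζ 2).trans_lt hd,
    (pow_le_pow_left₀ (norm_nonneg _) hz 2).trans_lt hd]
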